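/- Let U ⊆ ℂ be open, let x, y : ℂ → ℂ be analytic on a neighbourhood of U, let K ⊆ U be compact and let ε > 0. Then there exist a₁, a₂, b₁, b₂ ∈ ℂ with ‖a₁‖, ‖a₂‖, ‖b₁‖, ‖b₂‖ < ε such that, setting X(t) := x(t) + a₁·t + a₂·t² and Y(t) := y(t) + b₁·t + b₂·t² and W(t) := X'(t)·Y''(t) − X''(t)·Y'(t) (with ' = deriv), every t ∈ K with W(t) = 0 satisfies (deriv W)(t) ≠ 0; that is, all inflections of the perturbed curve (X, Y) lying in K are simple. -/

import Mathlib

/-- The Wronskian `X'Y'' − X''Y'` of a parametrised plane curve `(X, Y)`, whose zeros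
are the inflections of the curve. -/
noncomputable def wronskian2 (X Y : ℂ → ℂ) : ℂ → ℂ :=
  fun t => deriv X t * deriv (deriv Y) t - deriv (deriv X) t * deriv Y t

/-!
If the zeros of `g` are simple, then `f + c g` has only simple zeros for all but countably many `c`.
Indeed, where `g ≠ 0`, a multiple zero of `f + c g` makes `-c` a critical value of `f / g`, and an
analytic function has countably many critical values, being locally constant on its critical set;
where `g = 0`, it forces `c = -f' / g'`, and `g` has countably many simple zeros.

Adding `a t²` to `x` adds `2a` to `x''`, so a small `a` gives `X'' = x'' + 2a` simple zeros. Adding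
`b t` to `y` then adds `-b X''` to the Wronskian, so a small `b` makes its zeros simple.
-/

open Filter Set Topology

theorem countable_image_of_eventually_eq {α β : Type*} [TopologicalSpace α]
    [SecondCountableTopology α] {f : α → β} {s : Set α}
    (hf : ∀ t ∈ s, ∀ᶠ u in 𝓝[s] t, f u = f t) : (f '' s).Countable := by
  obtain ⟨c, -, hc, hsc⟩ := TopologicalSpace.countable_cover_nhdsWithin hf
  refine (hc.image f).mono ?_
  rintro _ ⟨u, hu, rfl⟩
  obtain ⟨t, htc, hut⟩ := mem_iUnion₂.1 (hsc hu)
  exact ⟨t, htc, hut.symm⟩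

/-- The function `f` has only simple zeros on `s`. At a point where `f` is not differentiable,
`deriv f` takes the junk value `0`, so such a point does not count as a simple zero. -/
def SimpleZerosOn {𝕜 E : Type*} [NontriviallyNormedField 𝕜] [NormedAddCommGroup E]
    [NormedSpace 𝕜 E] (f : 𝕜 → E) (s : Set 𝕜) : Prop :=
  ∀ t ∈ s, f t = 0 → deriv f t ≠ 0

section NontriviallyNormedField

variable {𝕜 E : Type*} [NontriviallyNormedField 𝕜] [NormedAddCommGroup E] [NormedSpace 𝕜 E]
  {f g : 𝕜 → E} {s : Set 𝕜} {t : 𝕜}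

theorem SimpleZerosOn.neg (hf : SimpleZerosOn f s) : SimpleZerosOn (fun t => -f t) s := by
  simpa only [SimpleZerosOn, deriv.fun_neg, neg_eq_zero, ne_eq] using hf

theorem SimpleZerosOn.congr (hf : SimpleZerosOn f s) (hfg : ∀ t ∈ s, f =ᶠ[𝓝 t] g) :
    SimpleZerosOn g s := by
  intro t ht
  rw [← (hfg t ht).eq_of_nhds, ← (hfg t ht).deriv_eq]
  exact hf t ht

theorem countable_setOf_eq_zero_and_deriv_ne_zero [SecondCountableTopology 𝕜] (f : 𝕜 → E) :
    {t | f t = 0 ∧ deriv f t ≠ 0}.Countable := by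
  rw [← image_id {t | f t = 0 ∧ deriv f t ≠ 0}]
  refine countable_image_of_eventually_eq fun t ⟨_, hft⟩ => ?_
  have isolated : ∀ᶠ u in 𝓝[≠] t, f u ≠ 0 :=
    (differentiableAt_of_deriv_ne_zero hft).hasDerivAt.eventually_ne hft
  filter_upwards [nhdsWithin_le_nhds (eventually_nhdsWithin_iff.1 isolated), self_mem_nhdsWithin]
    with u hu hus
  exact not_not.1 fun hut => hu hut hus.1

theorem deriv_deriv_fun_add [CompleteSpace E] (hf : AnalyticAt 𝕜 f t) (hg : AnalyticAt 𝕜 g t) :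
    deriv (deriv fun u => f u + g u) t = deriv (deriv f) t + deriv (deriv g) t := by
  have deriv_add_near : deriv (fun u => f u + g u) =ᶠ[𝓝 t] fun u => deriv f u + deriv g u := by
    filter_upwards [hf.eventually_analyticAt, hg.eventually_analyticAt] with u hfu hgu
    exact deriv_fun_add hfu.differentiableAt hgu.differentiableAt
  rw [deriv_add_near.deriv_eq,
    deriv_fun_add hf.deriv.differentiableAt hg.deriv.differentiableAt]

end NontriviallyNormedField

section CriticalValues

variable {𝕜 E : Type*} [RCLike 𝕜] [NormedAddCommGroup E] [NormedSpace 𝕜 E]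
  {f : 𝕜 → E} {s : Set 𝕜} {t : 𝕜}

theorem eventually_eq_of_eventually_deriv_eq_zero (hf : ∀ᶠ u in 𝓝 t, DifferentiableAt 𝕜 f u)
    (hf' : ∀ᶠ u in 𝓝 t, deriv f u = 0) : ∀ᶠ u in 𝓝 t, f u = f t := by
  obtain ⟨V, hV, hVo, htV⟩ := eventually_nhds_iff.1 (hf.and hf')
  have level_set_open : IsOpen (V ∩ f ⁻¹' {f t}) :=
    hVo.isOpen_inter_preimage_of_deriv_eq_zero
      (fun u hu => (hV u hu).1.differentiableWithinAt) (fun u hu => (hV u hu).2) _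
  filter_upwards [level_set_open.mem_nhds ⟨htV, rfl⟩] with u hu using hu.2

theorem countable_criticalValues [CompleteSpace E] (hf : AnalyticOnNhd 𝕜 f s) :
    (f '' {t ∈ s | deriv f t = 0}).Countable := by
  refine countable_image_of_eventually_eq fun t ⟨ht, _⟩ => ?_
  rcases (hf t ht).deriv.eventually_eq_zero_or_eventually_ne_zero with hzero | hne
  · exact nhdsWithin_le_nhds <| eventually_eq_of_eventually_deriv_eq_zero
      ((hf t ht).eventually_analyticAt.mono fun _ hu => hu.differentiableAt) hzero
  · filter_upwards [nhdsWithin_le_nhds (eventually_nhdsWithin_iff.1 hne), self_mem_nhdsWithin]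
      with u hu hus
    exact congrArg f (not_not.1 fun hut => hu hut hus.2)

end CriticalValues

section Pencil

variable {𝕜 : Type*} [RCLike 𝕜] {f g : 𝕜 → 𝕜} {s : Set 𝕜}

theorem countable_not_simpleZerosOn_add_const_mul (hf : AnalyticOnNhd 𝕜 f s)
    (hg : AnalyticOnNhd 𝕜 g s) (hg₀ : SimpleZerosOn g s) :
    {c : 𝕜 | ¬ SimpleZerosOn (fun t => f t + c * g t) s}.Countable := by
  have quotient_values := countable_criticalValues (f := fun t => -(f t / g t))
    (s := {t ∈ s | g t ≠ 0}) fun t ht => ((hf t ht.1).fun_div (hg t ht.1) ht.2).fun_neg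
  have zero_values := (countable_setOf_eq_zero_and_deriv_ne_zero g).image
    fun t => -(deriv f t / deriv g t)
  refine (quotient_values.union zero_values).mono fun c hc => ?_
  obtain ⟨t, ht, hval, hder⟩ :
      ∃ t ∈ s, f t + c * g t = 0 ∧ deriv (fun t => f t + c * g t) t = 0 := by
    simpa only [mem_ofPred_eq, SimpleZerosOn, not_forall, not_not, exists_prop] using hc
  have hft := (hf t ht).differentiableAt
  have hgt := (hg t ht).differentiableAt
  rw [deriv_fun_add hft (hgt.const_mul c), deriv_const_mul_field] at hder
  by_cases hgt₀ : g t = 0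
  · have hgt' : deriv g t ≠ 0 := hg₀ t ht hgt₀
    exact Or.inr ⟨t, ⟨hgt₀, hgt'⟩, by field_simp; linear_combination -hder⟩
  · refine Or.inl ⟨t, ⟨⟨ht, hgt₀⟩, ?_⟩, by field_simp; linear_combination -hval⟩
    rw [deriv.fun_neg, deriv_fun_div hft hgt hgt₀]
    field_simp
    linear_combination deriv g t * hval - g t * hder

theorem exists_norm_lt_simpleZerosOn_add_const_mul (hf : AnalyticOnNhd 𝕜 f s)
    (hg : AnalyticOnNhd 𝕜 g s) (hg₀ : SimpleZerosOn g s) {ε : ℝ} (hε : 0 < ε) :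
    ∃ c : 𝕜, ‖c‖ < ε ∧ SimpleZerosOn (fun t => f t + c * g t) s := by
  have good_dense := (countable_not_simpleZerosOn_add_const_mul hf hg hg₀).dense_compl 𝕜
  obtain ⟨c, hc, hcε⟩ :=
    good_dense.exists_mem_open Metric.isOpen_ball ⟨0, Metric.mem_ball_self hε⟩
  exact ⟨c, mem_ball_zero_iff.1 hcε, not_not.1 hc⟩

end Pencil

section Wronskian

variable {X Y Z : ℂ → ℂ} {s : Set ℂ} {t : ℂ} {ε : ℝ}

theorem analyticOnNhd_wronskian2 (hX : AnalyticOnNhd ℂ X s) (hY : AnalyticOnNhd ℂ Y s) :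
    AnalyticOnNhd ℂ (wronskian2 X Y) s :=
  (hX.deriv.mul hY.deriv.deriv).sub (hX.deriv.deriv.mul hY.deriv)

theorem wronskian2_add_right (hY : AnalyticAt ℂ Y t) (hZ : AnalyticAt ℂ Z t) :
    wronskian2 X (fun u => Y u + Z u) t = wronskian2 X Y t + wronskian2 X Z t := by
  simp only [wronskian2, deriv_deriv_fun_add hY hZ,
    deriv_fun_add hY.differentiableAt hZ.differentiableAt]
  ring

theorem wronskian2_const_mul_id (X : ℂ → ℂ) (b t : ℂ) :
    wronskian2 X (fun u => b * u) t = b * -deriv (deriv X) t := by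
  simp [wronskian2, mul_comm]

theorem exists_norm_lt_simpleZerosOn_deriv_deriv (hX : AnalyticOnNhd ℂ X s) (hε : 0 < ε) :
    ∃ a : ℂ, ‖a‖ < ε ∧ SimpleZerosOn (deriv (deriv fun u => X u + a * u ^ 2)) s := by
  have two_simpleZeros : SimpleZerosOn (fun _ : ℂ => (2 : ℂ)) s :=
    fun _ _ h => absurd h two_ne_zero
  obtain ⟨a, ha, hsimple⟩ := exists_norm_lt_simpleZerosOn_add_const_mul
    hX.deriv.deriv analyticOnNhd_const two_simpleZeros hε
  refine ⟨a, ha, hsimple.congr fun t ht => ?_⟩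
  filter_upwards [(hX t ht).eventually_analyticAt] with u hu
  rw [deriv_deriv_fun_add hu (by fun_prop)]
  simp

theorem exists_norm_lt_simpleZerosOn_wronskian2 (hX : AnalyticOnNhd ℂ X s)
    (hY : AnalyticOnNhd ℂ Y s) (hX'' : SimpleZerosOn (deriv (deriv X)) s) (hε : 0 < ε) :
    ∃ b : ℂ, ‖b‖ < ε ∧ SimpleZerosOn (wronskian2 X fun u => Y u + b * u) s := by
  obtain ⟨b, hb, hsimple⟩ := exists_norm_lt_simpleZerosOn_add_const_mul
    (analyticOnNhd_wronskian2 hX hY) hX.deriv.deriv.neg hX''.neg hε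
  refine ⟨b, hb, hsimple.congr fun t ht => ?_⟩
  filter_upwards [(hY t ht).eventually_analyticAt] with u hu
  rw [wronskian2_add_right hu (by fun_prop), wronskian2_const_mul_id]
  rfl

theorem exists_small_perturbation_simple_inflections_general {x y : ℂ → ℂ}
    (hx : AnalyticOnNhd ℂ x s) (hy : AnalyticOnNhd ℂ y s) (hε : 0 < ε) :
    ∃ a b : ℂ, ‖a‖ < ε ∧ ‖b‖ < ε ∧
      SimpleZerosOn (wronskian2 (fun u => x u + a * u ^ 2) (fun u => y u + b * u)) s := by
  obtain ⟨a, ha, hX''⟩ := exists_norm_lt_simpleZerosOn_deriv_deriv hx hε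
  have hX : AnalyticOnNhd ℂ (fun u => x u + a * u ^ 2) s :=
    fun t ht => (hx t ht).fun_add (by fun_prop)
  obtain ⟨b, hb, hW⟩ := exists_norm_lt_simpleZerosOn_wronskian2 hX hy hX'' hε
  exact ⟨a, b, ha, hb, hW⟩

end Wronskian

/-- **Proposition 2.7 (inflection part).** Any holomorphic plane curve `(x, y)` admits
arbitrarily small perturbations of the form `(x(t) + a₁t + a₂t², y(t) + b₁t + b₂t²)`
all of whose inflections in a given compact set are simple (simple zeros of the
Wronskian). -/
theorem exists_small_perturbation_simple_inflections
    (U : Set ℂ) (hUo : IsOpen U) (x y : ℂ → ℂ)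
    (hx : AnalyticOnNhd ℂ x U) (hy : AnalyticOnNhd ℂ y U)
    (K : Set ℂ) (hK : IsCompact K) (hKU : K ⊆ U) (ε : ℝ) (hε : 0 < ε) :
    ∃ a₁ a₂ b₁ b₂ : ℂ, ‖a₁‖ < ε ∧ ‖a₂‖ < ε ∧ ‖b₁‖ < ε ∧ ‖b₂‖ < ε ∧
      ∀ t ∈ K,
        wronskian2 (fun u => x u + a₁ * u + a₂ * u ^ 2)
            (fun u => y u + b₁ * u + b₂ * u ^ 2) t = 0 →
          deriv (wronskian2 (fun u => x u + a₁ * u + a₂ * u ^ 2)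
            (fun u => y u + b₁ * u + b₂ * u ^ 2)) t ≠ 0 := by
  obtain ⟨a, b, ha, hb, hW⟩ := exists_small_perturbation_simple_inflections_general hx hy hε
  refine ⟨0, a, b, 0, by simpa, ha, hb, by simpa, fun t ht => ?_⟩
  simpa only [zero_mul, add_zero] using hW t (hKU ht)
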